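/- Let n be a natural number and let g_i, v_i, G_i be real numbers for i ∈ {1, …, n} with 0 ≤ G_i ≤ 1 for all i. Define D_k = log₂(1 + k) for natural numbers k, and for each i let E_i = { j ∈ {1, …, n} : v_j < v_i }. Define the Lambda weights M_{ij} = |1/D_{|i−j|} − 1/D_{|i−j|+1}| · |G_i − G_j|. Assume that for each i, the map j ↦ |i − j| is injective on E_i. Then the RSPO upper-bound chain holds: ∑_{i=1}^n ∑_{j∈E_i} M_{ij} · 𝕀(g_i < g_j) ≤ ∑_{i=1}^n ∑_{j∈E_i} M_{ij} · log₂(1 + exp(g_j − g_i)) ≤ ∑_{i=1}^n log₂(1 + ∑_{j∈E_i} M_{ij} · exp(g_j − g_i)), where 𝕀(g_i < g_j) equals 1 if g_i < g_j and 0 otherwise. -/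

import Mathlib

/-- The DCG position discount `D k = log₂ (1 + k)`. -/
noncomputable def dcgD (k : ℕ) : ℝ := Real.logb 2 (1 + (k : ℝ))

/-!
Each indicator is at most the base-2 logistic loss of the score difference, and summing with
nonnegative weights gives the first inequality. The second holds row by row: by Jensen's inequality
with the missing mass `1 - ∑ j, M i j` placed at `1`, where the logarithm vanishes, it needs only
`∑ j, M i j ≤ 1`. That bound is a telescoping sum: the distances in a row are distinct and at least
`1`, so the differences of reciprocal discounts add up to at most `1 / D 1 ≤ 1`.
-/

section GeneralInequalities

variable {ι : Type*}

theorem ite_lt_le_logb_two_one_add_exp_sub (a b : ℝ) :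
    (if a < b then (1 : ℝ) else 0) ≤ Real.logb 2 (1 + Real.exp (b - a)) := by
  split_ifs with hab
  · have one_le_exp : 1 ≤ Real.exp (b - a) := Real.one_le_exp (sub_nonneg.2 hab.le)
    calc
      (1 : ℝ) = Real.logb 2 2 := (Real.logb_self_eq_one one_lt_two).symm
      _ ≤ Real.logb 2 (1 + Real.exp (b - a)) :=
        Real.logb_le_logb_of_le one_lt_two two_pos (by linarith)
  · exact Real.logb_nonneg one_lt_two (by linarith [Real.exp_pos (b - a)])

theorem sum_mul_log_one_add_le {s : Finset ι} {w x : ι → ℝ} (hw : ∀ j ∈ s, 0 ≤ w j)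
    (hw_sum : ∑ j ∈ s, w j ≤ 1) (hx : ∀ j ∈ s, -1 < x j) :
    ∑ j ∈ s, w j * Real.log (1 + x j) ≤ Real.log (1 + ∑ j ∈ s, w j * x j) := by
  have jensen := strictConcaveOn_log_Ioi.concaveOn.map_add_sum_le (p := fun j ↦ 1 + x j)
    (q := 1) hw (sub_add_cancel 1 _) (fun j hj ↦ neg_lt_iff_pos_add'.1 (hx j hj))
    (sub_nonneg.2 hw_sum) (Set.mem_Ioi.2 one_pos)
  have barycenter : (1 - ∑ j ∈ s, w j) + ∑ j ∈ s, w j * (1 + x j) =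
      1 + ∑ j ∈ s, w j * x j := by
    simp only [mul_add, mul_one, Finset.sum_add_distrib]
    ring
  simpa only [smul_eq_mul, Real.log_one, mul_zero, zero_add, mul_one, barycenter] using jensen

theorem sum_mul_logb_one_add_le {b : ℝ} (hb : 1 < b) {s : Finset ι} {w x : ι → ℝ}
    (hw : ∀ j ∈ s, 0 ≤ w j) (hw_sum : ∑ j ∈ s, w j ≤ 1) (hx : ∀ j ∈ s, -1 < x j) :
    ∑ j ∈ s, w j * Real.logb b (1 + x j) ≤ Real.logb b (1 + ∑ j ∈ s, w j * x j) := by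
  simp only [Real.logb, ← mul_div_assoc, ← Finset.sum_div]
  exact div_le_div_of_nonneg_right (sum_mul_log_one_add_le hw hw_sum hx) (Real.log_pos hb).le

theorem sum_abs_sub_succ_le_of_antitoneOn {R : Type*} [AddCommGroup R] [LinearOrder R]
    [IsOrderedAddMonoid R] {c : ℕ → R} {a : ℕ} (hc : AntitoneOn c (Set.Ici a))
    (hc_nonneg : ∀ k, a ≤ k → 0 ≤ c k) {s : Finset ℕ} (hs : ∀ k ∈ s, a ≤ k) :
    ∑ k ∈ s, |c k - c (k + 1)| ≤ c a := by
  obtain ⟨N, haN, hsN⟩ : ∃ N, a ≤ N ∧ s ⊆ Finset.Ico a N :=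
    ⟨a + (s.sup id + 1), Nat.le_add_right _ _, fun k hk ↦ by
      have : k ≤ s.sup id := Finset.le_sup (f := id) hk
      exact Finset.mem_Ico.2 ⟨hs k hk, by lia⟩⟩
  calc
    ∑ k ∈ s, |c k - c (k + 1)| ≤ ∑ k ∈ Finset.Ico a N, |c k - c (k + 1)| :=
      Finset.sum_le_sum_of_subset_of_nonneg hsN fun _ _ _ ↦ abs_nonneg _
    _ = ∑ k ∈ Finset.Ico a N, (-c (k + 1) - -c k) := Finset.sum_congr rfl fun k hk ↦ by
      have hak : a ≤ k := (Finset.mem_Ico.1 hk).1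
      rw [abs_of_nonneg (sub_nonneg.2 (hc hak (Nat.le_succ_of_le hak) k.le_succ)),
        neg_sub_neg]
    _ = c a - c N := by rw [Finset.sum_Ico_sub (fun k ↦ -c k) haN, neg_sub_neg]
    _ ≤ c a := sub_le_self _ (hc_nonneg N haN)

end GeneralInequalities

section LambdaWeight

variable {ι : Type*} {D : ℕ → ℝ} {d : ι → ι → ℕ} {G : ι → ℝ}

/-- The Lambda weight `M i j` of the pair `(i, j)` for a position discount `D` and gains `G`. The
distance `d i j`, which is `|i - j|` for items indexed by rank, is an arbitrary function here. -/
noncomputable def lambdaWeight (D : ℕ → ℝ) (d : ι → ι → ℕ) (G : ι → ℝ) (i j : ι) : ℝ :=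
  |1 / D (d i j) - 1 / D (d i j + 1)| * |G i - G j|

theorem lambdaWeight_nonneg (i j : ι) : 0 ≤ lambdaWeight D d G i j :=
  mul_nonneg (abs_nonneg _) (abs_nonneg _)

theorem sum_lambdaWeight_le_one (hD : MonotoneOn D (Set.Ici 1)) (hD_one : 1 ≤ D 1) {i : ι}
    {s : Finset ι} (hd : ∀ j ∈ s, 1 ≤ d i j) (hinj : Set.InjOn (d i) s)
    (hG : ∀ j ∈ s, |G i - G j| ≤ 1) :
    ∑ j ∈ s, lambdaWeight D d G i j ≤ 1 := by
  have hD_pos : ∀ k, 1 ≤ k → 0 < D k := fun k hk ↦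
    one_pos.trans_le (hD_one.trans (hD Set.self_mem_Ici hk hk))
  have hD_inv : AntitoneOn (fun k ↦ 1 / D k) (Set.Ici 1) := fun k hk l hl hkl ↦
    one_div_le_one_div_of_le (hD_pos k hk) (hD hk hl hkl)
  calc
    ∑ j ∈ s, lambdaWeight D d G i j ≤ ∑ j ∈ s, |1 / D (d i j) - 1 / D (d i j + 1)| :=
      Finset.sum_le_sum fun j hj ↦ mul_le_of_le_one_right (abs_nonneg _) (hG j hj)
    _ = ∑ k ∈ s.image (d i), |1 / D k - 1 / D (k + 1)| :=
      (Finset.sum_image (f := fun k ↦ |1 / D k - 1 / D (k + 1)|) hinj).symm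
    _ ≤ 1 / D 1 :=
      sum_abs_sub_succ_le_of_antitoneOn hD_inv (fun k hk ↦ (one_div_pos.2 (hD_pos k hk)).le)
        (Finset.forall_mem_image.2 hd)
    _ ≤ 1 := (div_le_one (hD_pos 1 le_rfl)).2 hD_one

theorem rspo_lambda_chain_general (hD : MonotoneOn D (Set.Ici 1)) (hD_one : 1 ≤ D 1)
    (I : Finset ι) (E : ι → Finset ι) (hd : ∀ i ∈ I, ∀ j ∈ E i, 1 ≤ d i j)
    (hinj : ∀ i ∈ I, Set.InjOn (d i) (E i)) (hG : ∀ i ∈ I, ∀ j ∈ E i, |G i - G j| ≤ 1)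
    (g : ι → ℝ) :
    ∑ i ∈ I, ∑ j ∈ E i, lambdaWeight D d G i j * (if g i < g j then (1 : ℝ) else 0) ≤
        ∑ i ∈ I, ∑ j ∈ E i, lambdaWeight D d G i j * Real.logb 2 (1 + Real.exp (g j - g i)) ∧
      ∑ i ∈ I, ∑ j ∈ E i, lambdaWeight D d G i j * Real.logb 2 (1 + Real.exp (g j - g i)) ≤
        ∑ i ∈ I, Real.logb 2 (1 + ∑ j ∈ E i, lambdaWeight D d G i j * Real.exp (g j - g i)) := by
  constructor
  · exact Finset.sum_le_sum fun i _ ↦ Finset.sum_le_sum fun j _ ↦ mul_le_mul_of_nonneg_left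
      (ite_lt_le_logb_two_one_add_exp_sub (g i) (g j)) (lambdaWeight_nonneg i j)
  · exact Finset.sum_le_sum fun i hi ↦ sum_mul_logb_one_add_le one_lt_two
      (fun j _ ↦ lambdaWeight_nonneg i j)
      (sum_lambdaWeight_le_one hD hD_one (hd i hi) (hinj i hi) (hG i hi))
      (fun _ _ ↦ neg_one_lt_zero.trans (Real.exp_pos _))

end LambdaWeight

theorem dcgD_one : dcgD 1 = 1 := by
  norm_num [dcgD]

theorem dcgD_monotone : Monotone dcgD := fun k l hkl ↦
  Real.logb_le_logb_of_le one_lt_two (by positivity) (by gcongr)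

/-- RSPO upper-bound chain with Lambda weights: for indices `i ∈ {1, …, n}`, scores `g i`,
rewards `v i`, normalized gains `G i ∈ [0, 1]`, negative sets
`E i = { j ∈ {1,…,n} : v j < v i }`, and Lambda weights
`M i j = |1/D_{|i−j|} − 1/D_{|i−j|+1}| * |G i − G j|`, assuming `j ↦ |i − j|` is injective
on `E i` for each `i`, the chain
`∑ i ∑ j ∈ E i, M i j * 𝕀(g i < g j) ≤ ∑ i ∑ j ∈ E i, M i j * log₂ (1 + exp (g j − g i))
  ≤ ∑ i, log₂ (1 + ∑ j ∈ E i, M i j * exp (g j − g i))` holds. -/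
theorem rspo_lambda_chain (n : ℕ) (g v G : ℕ → ℝ)
    (hG : ∀ i ∈ Finset.Icc 1 n, 0 ≤ G i ∧ G i ≤ 1)
    (E : ℕ → Finset ℕ) (hE : ∀ i, E i = (Finset.Icc 1 n).filter (fun j => v j < v i))
    (M : ℕ → ℕ → ℝ)
    (hM : ∀ i j, M i j =
      |1 / dcgD (Nat.dist i j) - 1 / dcgD (Nat.dist i j + 1)| * |G i - G j|)
    (hinj : ∀ i ∈ Finset.Icc 1 n, Set.InjOn (fun j => Nat.dist i j) (E i)) :
    (∑ i ∈ Finset.Icc 1 n, ∑ j ∈ E i, M i j * (if g i < g j then (1 : ℝ) else 0)) ≤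
        ∑ i ∈ Finset.Icc 1 n, ∑ j ∈ E i, M i j * Real.logb 2 (1 + Real.exp (g j - g i)) ∧
    (∑ i ∈ Finset.Icc 1 n, ∑ j ∈ E i, M i j * Real.logb 2 (1 + Real.exp (g j - g i))) ≤
        ∑ i ∈ Finset.Icc 1 n, Real.logb 2 (1 + ∑ j ∈ E i, M i j * Real.exp (g j - g i)) := by
  obtain rfl : M = lambdaWeight dcgD Nat.dist G := funext₂ hM
  have mem_E {i j : ℕ} (hj : j ∈ E i) : j ∈ Finset.Icc 1 n ∧ v j < v i :=
    Finset.mem_filter.1 (hE i ▸ hj)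
  have one_le_dist (i) (_ : i ∈ Finset.Icc 1 n) (j) (hj : j ∈ E i) : 1 ≤ Nat.dist i j :=
    Nat.dist_pos_of_ne fun hij ↦ (mem_E hj).2.ne (congrArg v hij.symm)
  have gain_gap_le_one (i) (hi : i ∈ Finset.Icc 1 n) (j) (hj : j ∈ E i) : |G i - G j| ≤ 1 :=
    abs_sub_le_of_nonneg_of_le (hG i hi).1 (hG i hi).2 (hG j (mem_E hj).1).1 (hG j (mem_E hj).1).2
  exact rspo_lambda_chain_general (dcgD_monotone.monotoneOn _) dcgD_one.ge _ E one_le_dist hinj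
    gain_gap_le_one g
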